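/- The regularization maps are compatible with the map S: Z̄^{*̄} = Z^{*} ∘ S and Z̄^{ш̄} = Z^{ш} ∘ S, where Z^{*} : (H^1, *) → ℝ[T] and Z^{ш} : (H^1, ш) → ℝ[T] are the unique ℚ-algebra homomorphisms extending Z and sending y to T, and Z̄^{*̄} : (H^1, *̄) → ℝ[T] and Z̄^{ш̄} : (H^1, ш̄) → ℝ[T] are the unique ℚ-algebra homomorphisms extending Z̄ and sending y to T. -/

import Mathlib

open scoped BigOperators

/-- The two-letter alphabet {x, y}. -/
inductive Letter : Type
  | x : Letter
  | y : Letter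
deriving DecidableEq

/-- `H = ℚ⟨x,y⟩`, the noncommutative polynomial ring over ℚ in two
indeterminates, realized as the monoid algebra of the free monoid on `{x,y}`. -/
abbrev H : Type := MonoidAlgebra ℚ (FreeMonoid Letter)

namespace H

/-- The monomial (word) of `H` corresponding to an element of the free monoid. -/
noncomputable def word (w : FreeMonoid Letter) : H := MonoidAlgebra.single w 1

/-- The generator `x`. -/
noncomputable def X : H := word (FreeMonoid.of Letter.x)

/-- The generator `y`. -/
noncomputable def Y : H := word (FreeMonoid.of Letter.y)

/-- The word `z_k = x^{k-1} y` (for `k ≥ 1`). -/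
def zW (k : ℕ) : FreeMonoid Letter :=
  FreeMonoid.ofList (List.replicate (k - 1) Letter.x ++ [Letter.y])

/-- `z_k = x^{k-1} y` as an element of `H`. -/
noncomputable def z (k : ℕ) : H := word (zW k)

/-- A list `[k₁,…,kₙ]` gives the word `z_{k₁} z_{k₂} ⋯ z_{kₙ}`. -/
def zListW (ks : List ℕ) : FreeMonoid Letter :=
  FreeMonoid.ofList (ks.flatMap fun k => List.replicate (k - 1) Letter.x ++ [Letter.y])

/-- `H¹ = ℚ + Hy` as a ℚ-submodule of `H`. -/
noncomputable def H1 : Submodule ℚ H :=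
  LinearMap.range (LinearMap.mulRight ℚ Y) ⊔ Submodule.span ℚ {1}

/-- `H⁰ = ℚ + xHy` as a ℚ-submodule of `H`. -/
noncomputable def H0 : Submodule ℚ H :=
  LinearMap.range ((LinearMap.mulRight ℚ Y).comp (LinearMap.mulLeft ℚ X)) ⊔
    Submodule.span ℚ {1}

/-- Parse a word of `H¹` into the exponent list of its `z`-decomposition:
`z_{k₁}⋯z_{kₙ} ↦ [k₁,…,kₙ]` (auxiliary accumulator version). -/
def toZAux : List Letter → ℕ → List ℕ
  | [], _ => []
  | Letter.x :: r, n => toZAux r (n + 1)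
  | Letter.y :: r, n => (n + 1) :: toZAux r 0

/-- The `z`-decomposition of a word of `H¹`. -/
def toZ (w : FreeMonoid Letter) : List ℕ := toZAux (FreeMonoid.toList w) 0

/-- The harmonic product on words of `H¹` (via `z`-decompositions):
`1 * w = w * 1 = w` and
`z_k w₁ * z_l w₂ = z_k (w₁ * z_l w₂) + z_l (z_k w₁ * w₂) + z_{k+l} (w₁ * w₂)`. -/
noncomputable def harmW : List ℕ → List ℕ → H
  | [], w => word (zListW w)
  | k :: w1, [] => word (zListW (k :: w1))
  | k :: w1, l :: w2 =>
      z k * harmW w1 (l :: w2) + z l * harmW (k :: w1) w2 + z (k + l) * harmW w1 w2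
termination_by w1 w2 => w1.length + w2.length
decreasing_by all_goals simp [Nat.lt_succ_iff] <;> omega

/-- The n-harmonic product on words of `H¹`:
`1 *̄ w = w *̄ 1 = w` and
`z_k w₁ *̄ z_l w₂ = z_k (w₁ *̄ z_l w₂) + z_l (z_k w₁ *̄ w₂) − z_{k+l} (w₁ *̄ w₂)`. -/
noncomputable def nharmW : List ℕ → List ℕ → H
  | [], w => word (zListW w)
  | k :: w1, [] => word (zListW (k :: w1))
  | k :: w1, l :: w2 =>
      z k * nharmW w1 (l :: w2) + z l * nharmW (k :: w1) w2 - z (k + l) * nharmW w1 w2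
termination_by w1 w2 => w1.length + w2.length
decreasing_by all_goals simp [Nat.lt_succ_iff] <;> omega

/-- The harmonic product `*` on `H¹`, extended ℚ-bilinearly. -/
noncomputable def harm (a b : H) : H :=
  Finsupp.sum a.coeff fun w1 c1 =>
    Finsupp.sum b.coeff fun w2 c2 => (c1 * c2) • harmW (toZ w1) (toZ w2)

/-- The n-harmonic product `*̄` on `H¹`, extended ℚ-bilinearly. -/
noncomputable def nharm (a b : H) : H :=
  Finsupp.sum a.coeff fun w1 c1 =>
    Finsupp.sum b.coeff fun w2 c2 => (c1 * c2) • nharmW (toZ w1) (toZ w2)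

/-- The letter exchange `τ(x) = y`, `τ(y) = x`. -/
def τ : Letter → Letter
  | Letter.x => Letter.y
  | Letter.y => Letter.x

/-- `δ(w) = 1` if `w` is the empty word, `0` otherwise. -/
def δ : List Letter → ℚ
  | [] => 1
  | _ :: _ => 0

/-- The shuffle product on words:
`1 ш w = w ш 1 = w` and `u₁w₁ ш u₂w₂ = u₁(w₁ ш u₂w₂) + u₂(u₁w₁ ш w₂)`. -/
noncomputable def shW : List Letter → List Letter → H
  | [], w => word (FreeMonoid.ofList w)
  | u :: w, [] => word (FreeMonoid.ofList (u :: w))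
  | u1 :: w1, u2 :: w2 =>
      word (FreeMonoid.of u1) * shW w1 (u2 :: w2) +
        word (FreeMonoid.of u2) * shW (u1 :: w1) w2
termination_by w1 w2 => w1.length + w2.length
decreasing_by all_goals simp [Nat.lt_succ_iff]

/-- The n-shuffle product on words: `1 ш̄ w = w ш̄ 1 = w` and
`u₁w₁ ш̄ u₂w₂ = u₁(w₁ ш̄ u₂w₂) + u₂(u₁w₁ ш̄ w₂) − δ(w₁)τ(u₁)u₂w₂ − δ(w₂)τ(u₂)u₁w₁`. -/
noncomputable def nshW : List Letter → List Letter → H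
  | [], w => word (FreeMonoid.ofList w)
  | u :: w, [] => word (FreeMonoid.ofList (u :: w))
  | u1 :: w1, u2 :: w2 =>
      word (FreeMonoid.of u1) * nshW w1 (u2 :: w2) +
        word (FreeMonoid.of u2) * nshW (u1 :: w1) w2 -
        δ w1 • word (FreeMonoid.ofList (τ u1 :: u2 :: w2)) -
        δ w2 • word (FreeMonoid.ofList (τ u2 :: u1 :: w1))
termination_by w1 w2 => w1.length + w2.length
decreasing_by all_goals simp [Nat.lt_succ_iff]

/-- The shuffle product `ш` on `H`, extended ℚ-bilinearly. -/
noncomputable def sh (a b : H) : H :=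
  Finsupp.sum a.coeff fun w1 c1 =>
    Finsupp.sum b.coeff fun w2 c2 =>
      (c1 * c2) • shW (FreeMonoid.toList w1) (FreeMonoid.toList w2)

/-- The n-shuffle product `ш̄` on `H`, extended ℚ-bilinearly. -/
noncomputable def nsh (a b : H) : H :=
  Finsupp.sum a.coeff fun w1 c1 =>
    Finsupp.sum b.coeff fun w2 c2 =>
      (c1 * c2) • nshW (FreeMonoid.toList w1) (FreeMonoid.toList w2)

/-- `S₁`: the ℚ-algebra endomorphism of `H` with `S₁(x) = x`, `S₁(y) = x + y`. -/
noncomputable def S1 : H →ₐ[ℚ] H :=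
  MonoidAlgebra.lift ℚ H (FreeMonoid Letter)
    (FreeMonoid.lift fun u => match u with
      | Letter.x => X
      | Letter.y => X + Y)

/-- `S₂`: the ℚ-algebra endomorphism of `H` with `S₂(x) = x`, `S₂(y) = y − x`. -/
noncomputable def S2 : H →ₐ[ℚ] H :=
  MonoidAlgebra.lift ℚ H (FreeMonoid Letter)
    (FreeMonoid.lift fun u => match u with
      | Letter.x => X
      | Letter.y => Y - X)

/-- `S` on a word: `S(1) = 1` and `S(Fy) = S₁(F)y`. -/
noncomputable def SW (w : FreeMonoid Letter) : H :=
  match (FreeMonoid.toList w).getLast? with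
  | some Letter.y =>
      S1 (word (FreeMonoid.ofList (FreeMonoid.toList w).dropLast)) * Y
  | _ => word w

/-- The ℚ-linear map `S : H¹ → H¹` with `S(1) = 1`, `S(Fy) = S₁(F)y`. -/
noncomputable def S (a : H) : H := Finsupp.sum a.coeff fun w c => c • SW w

/-- `S̃` on a word: `S̃(1) = 1` and `S̃(Fy) = S₂(F)y`. -/
noncomputable def StW (w : FreeMonoid Letter) : H :=
  match (FreeMonoid.toList w).getLast? with
  | some Letter.y =>
      S2 (word (FreeMonoid.ofList (FreeMonoid.toList w).dropLast)) * Y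
  | _ => word w

/-- The ℚ-linear map `S̃ : H¹ → H¹` with `S̃(1) = 1`, `S̃(Fy) = S₂(F)y`. -/
noncomputable def St (a : H) : H := Finsupp.sum a.coeff fun w c => c • StW w

/-- The multiple zeta value `ζ(k₁,…,kₙ)`: the sum over strictly decreasing
tuples `m₁ > m₂ > ⋯ > mₙ > 0` of `1/(m₁^{k₁}⋯mₙ^{kₙ})`. -/
noncomputable def mzeta (ks : List ℕ) : ℝ :=
  ∑' m : {f : Fin ks.length → ℕ // (∀ i, 0 < f i) ∧
      ∀ i j : Fin ks.length, i < j → f j < f i},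
    ∏ i : Fin ks.length, ((m.1 i : ℝ) ^ ks.get i)⁻¹

/-- The non-strict multiple zeta value `ζ̄(k₁,…,kₙ)`: the sum over weakly
decreasing tuples `m₁ ≥ m₂ ≥ ⋯ ≥ mₙ > 0` of `1/(m₁^{k₁}⋯mₙ^{kₙ})`. -/
noncomputable def nmzeta (ks : List ℕ) : ℝ :=
  ∑' m : {f : Fin ks.length → ℕ // (∀ i, 0 < f i) ∧
      ∀ i j : Fin ks.length, i ≤ j → f j ≤ f i},
    ∏ i : Fin ks.length, ((m.1 i : ℝ) ^ ks.get i)⁻¹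

/-- The evaluation map `Z : H⁰ → ℝ`, `Z(1) = 1`,
`Z(z_{k₁}⋯z_{kₙ}) = ζ(k₁,…,kₙ)` (extended ℚ-linearly to `H`). -/
noncomputable def Z (a : H) : ℝ := Finsupp.sum a.coeff fun w c => (c : ℝ) * mzeta (toZ w)

/-- The n-evaluation map `Z̄ : H⁰ → ℝ`, `Z̄(1) = 1`,
`Z̄(z_{k₁}⋯z_{kₙ}) = ζ̄(k₁,…,kₙ)` (extended ℚ-linearly to `H`). -/
noncomputable def Zbar (a : H) : ℝ := Finsupp.sum a.coeff fun w c => (c : ℝ) * nmzeta (toZ w)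

/-- `i`-fold n-harmonic power: `a^{*̄ 0} = 1`, `a^{*̄ (i+1)} = a *̄ a^{*̄ i}`. -/
noncomputable def nharmPow : ℕ → H → H
  | 0, _ => 1
  | i + 1, a => nharm a (nharmPow i a)

/-- `i`-fold n-shuffle power: `a^{ш̄ 0} = 1`, `a^{ш̄ (i+1)} = a ш̄ a^{ш̄ i}`. -/
noncomputable def nshPow : ℕ → H → H
  | 0, _ => 1
  | i + 1, a => nsh a (nshPow i a)

end H

open H

/-- `IsRegHom mul ev f` says the ℚ-linear map `f : H → ℝ[T]` is a ℚ-algebra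
homomorphism from `(H¹, mul)` to `ℝ[T]` which extends the evaluation map
`ev` on `H⁰` and sends `y` to `T`. -/
def IsRegHom (mul : H → H → H) (ev : H → ℝ) (f : H →ₗ[ℚ] Polynomial ℝ) : Prop :=
  (∀ a ∈ H1, ∀ b ∈ H1, f (mul a b) = f a * f b) ∧
  (∀ a ∈ H0, f a = Polynomial.C (ev a)) ∧
  f Y = Polynomial.X

/-!
Strict and non-strict nested sums are obtained from two actions of `H` on real sequences: `x`
multiplies by `1 / m`, and `y` sends `g` to `(1 / m) ∑_{j < m} g j`, respectively to
`(1 / m) ∑_{j ≤ m} g j`. Splitting off the term `j = m` shows that the second action is the first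
one composed with `S₁`; summing over `m` gives `Z̄ = Z ∘ S` on `H⁰`.

The four products enter only through the multiplication by `y`. Each of these operators maps
`yⁿ v` with `v ∈ H⁰` to `(n + 1) yⁿ⁺¹ v` modulo `H⁰ + y H⁰ + ⋯ + yⁿ H⁰`, so `H¹` is generated from
`H⁰` by any one of them. As `S` turns `y *̄ w` into `y * S w` and `y ш̄ w` into `y ш S w`, the
identity on `H⁰` propagates to `H¹`.
-/

namespace H

section Words

variable {M : Type*} [AddCommGroup M] [Module ℚ M]

/-- The `ℚ`-linear map on `H` with prescribed values on words. -/
noncomputable def wordExt (φ : FreeMonoid Letter → M) : H →ₗ[ℚ] M :=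
  (MonoidAlgebra.basis (FreeMonoid Letter) ℚ).constr ℚ φ

lemma wordExt_apply (φ : FreeMonoid Letter → M) (a : H) :
    wordExt φ a = Finsupp.sum a.coeff fun w c => c • φ w :=
  Module.Basis.constr_apply ..

lemma wordExt_word (φ : FreeMonoid Letter → M) (w : FreeMonoid Letter) :
    wordExt φ (word w) = φ w :=
  Module.Basis.constr_basis ..

lemma sum_coeff_word_smul (φ : FreeMonoid Letter → FreeMonoid Letter → M)
    (w : FreeMonoid Letter) (b : H) :
    (Finsupp.sum (word w).coeff fun w₁ c₁ =>
      Finsupp.sum b.coeff fun w₂ c₂ => (c₁ * c₂) • φ w₁ w₂) = wordExt (φ w) b := by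
  simp [word, wordExt_apply, Finsupp.sum_single_index]

lemma word_one : word 1 = 1 := rfl

lemma word_mul (v w : FreeMonoid Letter) : word (v * w) = word v * word w := by
  simp [word, MonoidAlgebra.single_mul_single]

lemma word_ofList_cons (u : Letter) (l : List Letter) :
    word (.ofList (u :: l)) = word (.of u) * word (.ofList l) :=
  word_mul (.of u) (.ofList l)

lemma word_ofList_append_y (l : List Letter) :
    word (.ofList (l ++ [Letter.y])) = word (.ofList l) * Y :=
  word_mul ..

lemma eq_top_of_word_mem {p : Submodule ℚ H} (hp : ∀ l, word (.ofList l) ∈ p) : p = ⊤ := by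
  rw [eq_top_iff, ← (MonoidAlgebra.basis (FreeMonoid Letter) ℚ).span_eq, Submodule.span_le]
  rintro _ ⟨w, rfl⟩
  exact hp w.toList

lemma linearMap_ext {f g : H →ₗ[ℚ] M}
    (h : ∀ l, f (word (.ofList l)) = g (word (.ofList l))) : f = g :=
  LinearMap.eqLocus_eq_top.mp (eq_top_of_word_mem h)

end Words

/-- The left ideal `Hy`, which differs from `H¹` by the constants. -/
noncomputable def Hy : Submodule ℚ H := LinearMap.range (LinearMap.mulRight ℚ Y)

lemma mul_Y_mem_Hy (F : H) : F * Y ∈ Hy := ⟨F, rfl⟩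

lemma Y_mem_Hy : Y ∈ Hy := by simpa using mul_Y_mem_Hy 1

lemma mul_mem_Hy (a : H) {v : H} (hv : v ∈ Hy) : a * v ∈ Hy := by
  obtain ⟨F, rfl⟩ := hv
  simpa [mul_assoc] using mul_Y_mem_Hy (a * F)

lemma Hy_le_H1 : Hy ≤ H1 := le_sup_left

lemma one_mem_H1 : 1 ∈ H1 := Submodule.mem_sup_right (Submodule.mem_span_singleton_self 1)

lemma one_mem_H0 : 1 ∈ H0 := Submodule.mem_sup_right (Submodule.mem_span_singleton_self 1)

lemma X_mul_mem_H0 {v : H} (hv : v ∈ Hy) : X * v ∈ H0 := by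
  obtain ⟨F, rfl⟩ := hv
  exact Submodule.mem_sup_left ⟨F, by simp [mul_assoc]⟩

lemma H1_le {p : Submodule ℚ H} (one_mem : 1 ∈ p) (hHy : Hy ≤ p) : H1 ≤ p :=
  sup_le hHy ((Submodule.span_singleton_le_iff_mem ..).mpr one_mem)

lemma H0_le {p : Submodule ℚ H} (one_mem : 1 ∈ p) (hX : ∀ v ∈ Hy, X * v ∈ p) : H0 ≤ p := by
  refine sup_le ?_ ((Submodule.span_singleton_le_iff_mem ..).mpr one_mem)
  rintro _ ⟨F, rfl⟩
  simpa [mul_assoc] using hX _ (mul_Y_mem_Hy F)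

lemma H0_le_H1 : H0 ≤ H1 :=
  H0_le one_mem_H1 fun _ hv => Hy_le_H1 (mul_mem_Hy X hv)

lemma Hy_le {p : Submodule ℚ H} (Y_mem : Y ∈ p)
    (X_mul_mem : ∀ v ∈ Hy, v ∈ p → X * v ∈ p) (Y_mul_mem : ∀ v ∈ Hy, v ∈ p → Y * v ∈ p) :
    Hy ≤ p := by
  have h_words : p.comap (LinearMap.mulRight ℚ Y) = ⊤ := eq_top_of_word_mem fun l => by
    rw [Submodule.mem_comap, LinearMap.mulRight_apply]
    induction l with
    | nil => simpa [word_one] using Y_mem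
    | cons u l ih =>
      rw [word_ofList_cons, mul_assoc]
      cases u
      · exact X_mul_mem _ (mul_Y_mem_Hy _) ih
      · exact Y_mul_mem _ (mul_Y_mem_Hy _) ih
  rintro _ ⟨F, rfl⟩
  exact h_words.ge (Submodule.mem_top (x := F))

section MapS

lemma S1_X : S1 X = X := by simp [S1, X, word]

lemma S1_Y : S1 Y = X + Y := by simp [S1, Y, word]

/-- The map `S` as a bundled linear map. -/
noncomputable def linS : H →ₗ[ℚ] H := wordExt SW

lemma linS_apply (a : H) : linS a = S a := wordExt_apply SW a

lemma linS_one : linS 1 = 1 := by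
  rw [← word_one, linS, wordExt_word]; rfl

lemma linS_mul_Y (F : H) : linS (F * Y) = S1 F * Y := by
  have h_words : linS ∘ₗ LinearMap.mulRight ℚ Y = LinearMap.mulRight ℚ Y ∘ₗ S1.toLinearMap :=
    linearMap_ext fun l => by
      simp [← word_ofList_append_y, linS, wordExt_word, SW]
  exact LinearMap.congr_fun h_words F

lemma linS_Y : linS Y = Y := by simpa using linS_mul_Y 1

lemma linS_mul (a : H) {v : H} (hv : v ∈ Hy) : linS (a * v) = S1 a * linS v := by
  obtain ⟨F, rfl⟩ := hv
  simp [← mul_assoc, linS_mul_Y]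

lemma linS_mem_Hy {v : H} (hv : v ∈ Hy) : linS v ∈ Hy := by
  obtain ⟨F, rfl⟩ := hv
  simpa [linS_mul_Y] using mul_Y_mem_Hy (S1 F)

lemma linS_mem_H1 {v : H} (hv : v ∈ H1) : linS v ∈ H1 :=
  H1_le (p := H1.comap linS) (by simpa [linS_one] using one_mem_H1)
    (fun _ hw => Hy_le_H1 (linS_mem_Hy hw)) hv

lemma linS_mem_H0 {v : H} (hv : v ∈ H0) : linS v ∈ H0 :=
  H0_le (p := H0.comap linS) (by simpa [linS_one] using one_mem_H0)
    (fun w hw => by simpa [linS_mul X hw, S1_X] using X_mul_mem_H0 (linS_mem_Hy hw)) hv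

end MapS

section NestedSums

/-- The sequence `m ↦ 1 / m`, with the value `0` at `m = 0`. -/
noncomputable def recip : ℕ → ℝ := fun m => (m : ℝ)⁻¹

/-- The representation of `H` on real sequences whose matrix coefficients are nested sums: `x` acts
as multiplication by `1 / m`, and `y` as `g ↦ (1 / m) ∑_{j < b m} g j`. The bound `b = id` gives
strict nesting of the summation indices, `b = Nat.succ` non-strict nesting. -/
noncomputable def nestedSum (b : ℕ → ℕ) : H →ₐ[ℚ] Module.End ℚ (ℕ → ℝ) :=
  MonoidAlgebra.lift ℚ _ _ (FreeMonoid.lift fun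
    | Letter.x => LinearMap.mulLeft ℚ recip
    | Letter.y => LinearMap.mulLeft ℚ recip ∘ₗ
        LinearMap.pi fun m => ∑ j ∈ Finset.range (b m), LinearMap.proj j)

variable {b : ℕ → ℕ}

lemma nestedSum_X (g : ℕ → ℝ) (m : ℕ) : nestedSum b X g m = (m : ℝ)⁻¹ * g m := by
  simp [nestedSum, X, word, recip]

lemma nestedSum_Y (g : ℕ → ℝ) (m : ℕ) :
    nestedSum b Y g m = (m : ℝ)⁻¹ * ∑ j ∈ Finset.range (b m), g j := by
  simp [nestedSum, Y, word, recip]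

lemma nestedSum_X_mul (F : H) (g : ℕ → ℝ) (m : ℕ) :
    nestedSum b (X * F) g m = (m : ℝ)⁻¹ * nestedSum b F g m := by
  rw [map_mul, Module.End.mul_apply, nestedSum_X]

lemma nestedSum_Y_mul (F : H) (g : ℕ → ℝ) (m : ℕ) :
    nestedSum b (Y * F) g m = (m : ℝ)⁻¹ * ∑ j ∈ Finset.range (b m), nestedSum b F g j := by
  rw [map_mul, Module.End.mul_apply, nestedSum_Y]

/-- Splitting off the diagonal term `j = m` of `∑_{j ≤ m}` is the substitution `y ↦ x + y`. -/
lemma nestedSum_succ : nestedSum Nat.succ = (nestedSum id).comp S1 := by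
  refine MonoidAlgebra.algHom_ext' (FreeMonoid.hom_eq fun u => ?_) (Subsingleton.elim _ _)
  ext g m
  cases u
  · change nestedSum Nat.succ X g m = nestedSum id (S1 X) g m
    rw [S1_X, nestedSum_X, nestedSum_X]
  · change nestedSum Nat.succ Y g m = nestedSum id (S1 Y) g m
    rw [S1_Y, map_add, LinearMap.add_apply, Pi.add_apply, nestedSum_X, nestedSum_Y, nestedSum_Y,
      Finset.sum_range_succ, id]
    ring

end NestedSums

section Convergence

lemma sum_range_inv_sqrt_le (m : ℕ) :
    ∑ j ∈ Finset.range (m + 1), (√(j : ℝ))⁻¹ ≤ 2 * √(m : ℝ) := by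
  induction m with
  | zero => simp
  | succ m ih =>
    have h_pos : 0 < √((m + 1 : ℕ) : ℝ) := by positivity
    have h_gap : (√((m + 1 : ℕ) : ℝ))⁻¹ ≤ 2 * √((m + 1 : ℕ) : ℝ) - 2 * √(m : ℝ) := by
      rw [inv_le_iff_one_le_mul₀ h_pos]
      have h_sq : √((m + 1 : ℕ) : ℝ) ^ 2 = √(m : ℝ) ^ 2 + 1 := by
        rw [Real.sq_sqrt (by positivity), Real.sq_sqrt (by positivity)]; push_cast; ring
      nlinarith [sq_nonneg (√((m + 1 : ℕ) : ℝ) - √(m : ℝ))]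
    rw [Finset.sum_range_succ]
    linarith

/-- The real sequences bounded by a multiple of `1 / √m`; such a sequence vanishes at `m = 0`.
Unlike `O(1 / m)`, this condition is stable under `g ↦ (1 / m) ∑_{j ≤ m} g j`. -/
noncomputable def sqrtDecay : Submodule ℚ (ℕ → ℝ) where
  carrier := {g | ∃ C, ∀ m, |g m| ≤ C * (√(m : ℝ))⁻¹}
  zero_mem' := ⟨0, by simp⟩
  add_mem' := by
    rintro f g ⟨C, hf⟩ ⟨D, hg⟩
    refine ⟨C + D, fun m => (abs_add_le _ _).trans ?_⟩
    rw [add_mul]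
    exact add_le_add (hf m) (hg m)
  smul_mem' := by
    rintro c g ⟨C, hg⟩
    refine ⟨|(c : ℝ)| * C, fun m => ?_⟩
    rw [Pi.smul_apply, Rat.smul_def, abs_mul, mul_assoc]
    exact mul_le_mul_of_nonneg_left (hg m) (abs_nonneg _)

lemma inv_natCast_le_inv_sqrt (m : ℕ) : (m : ℝ)⁻¹ ≤ (√(m : ℝ))⁻¹ := by
  rcases m.eq_zero_or_pos with rfl | hm
  · simp
  · have h_one : (1 : ℝ) ≤ m := by exact_mod_cast hm
    exact inv_anti₀ (by positivity) (Real.sqrt_le_self_iff.mpr (.inr h_one))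

lemma recip_mem_sqrtDecay : recip ∈ sqrtDecay :=
  ⟨1, fun m => by simpa [recip] using inv_natCast_le_inv_sqrt m⟩

variable {b : ℕ → ℕ} {g : ℕ → ℝ}

lemma nestedSum_X_mem_sqrtDecay (hg : g ∈ sqrtDecay) : nestedSum b X g ∈ sqrtDecay := by
  obtain ⟨C, hC⟩ := hg
  refine ⟨C, fun m => ?_⟩
  rw [nestedSum_X, abs_mul, abs_inv, Nat.abs_cast]
  exact (mul_le_of_le_one_left (abs_nonneg _) (Nat.cast_inv_le_one m)).trans (hC m)

lemma nestedSum_Y_mem_sqrtDecay (hb : ∀ m, b m ≤ m + 1) (hg : g ∈ sqrtDecay) :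
    nestedSum b Y g ∈ sqrtDecay := by
  obtain ⟨C, hC⟩ := hg
  have hC_nonneg : 0 ≤ C := by simpa using (abs_nonneg _).trans (hC 1)
  refine ⟨2 * C, fun m => ?_⟩
  calc |nestedSum b Y g m|
      ≤ (m : ℝ)⁻¹ * ∑ j ∈ Finset.range (b m), |g j| := by
        rw [nestedSum_Y, abs_mul, abs_inv, Nat.abs_cast]
        gcongr
        exact Finset.abs_sum_le_sum_abs _ _
    _ ≤ (m : ℝ)⁻¹ * ∑ j ∈ Finset.range (m + 1), C * (√(j : ℝ))⁻¹ := by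
        gcongr (m : ℝ)⁻¹ * ?_
        exact (Finset.sum_le_sum fun j _ => hC j).trans
          (Finset.sum_le_sum_of_subset_of_nonneg (Finset.range_mono (hb m))
            fun _ _ _ => by positivity)
    _ ≤ (m : ℝ)⁻¹ * (C * (2 * √(m : ℝ))) := by
        rw [← Finset.mul_sum]
        gcongr
        exact sum_range_inv_sqrt_le m
    _ = 2 * C * (√(m : ℝ))⁻¹ := by
        rw [← Real.sqrt_div_self]; ring

lemma nestedSum_mem_sqrtDecay (hb : ∀ m, b m ≤ m + 1) (F : H) (hg : g ∈ sqrtDecay) :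
    nestedSum b F g ∈ sqrtDecay := by
  have h_words : sqrtDecay.comap (LinearMap.applyₗ g ∘ₗ (nestedSum b).toLinearMap) = ⊤ :=
    eq_top_of_word_mem fun l => by
      change nestedSum b (word (.ofList l)) g ∈ sqrtDecay
      induction l with
      | nil => simpa [word_one] using hg
      | cons u l ih =>
        rw [word_ofList_cons, map_mul, Module.End.mul_apply]
        cases u
        · exact nestedSum_X_mem_sqrtDecay ih
        · exact nestedSum_Y_mem_sqrtDecay hb ih
  exact h_words.ge (Submodule.mem_top (x := F))

lemma summable_inv_mul_of_mem_sqrtDecay (hg : g ∈ sqrtDecay) :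
    Summable fun m : ℕ => (m : ℝ)⁻¹ * g m := by
  obtain ⟨C, hC⟩ := hg
  have h_summable : Summable fun m : ℕ => C * (m : ℝ) ^ (-(3 / 2) : ℝ) :=
    (Real.summable_nat_rpow.mpr (by norm_num)).mul_left C
  refine h_summable.of_norm_bounded fun m => ?_
  rw [Real.norm_eq_abs, abs_mul, abs_inv, Nat.abs_cast]
  calc (m : ℝ)⁻¹ * |g m| ≤ (m : ℝ)⁻¹ * (C * (√(m : ℝ))⁻¹) := by gcongr; exact hC m
    _ = C * (m : ℝ) ^ (-(3 / 2) : ℝ) := by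
        rcases m.eq_zero_or_pos with rfl | hm
        · simp [Real.zero_rpow]
        · rw [mul_left_comm, Real.sqrt_eq_rpow, ← Real.rpow_neg_one,
            ← Real.rpow_neg (by positivity), ← Real.rpow_add (by positivity)]
          norm_num

lemma summable_nestedSum_X_mul (hb : ∀ m, b m ≤ m + 1) (F : H) :
    Summable (nestedSum b (X * F) recip) := by
  simpa only [← nestedSum_X_mul] using
    summable_inv_mul_of_mem_sqrtDecay (nestedSum_mem_sqrtDecay hb F recip_mem_sqrtDecay)

end Convergence

section ChainSums

open Filter Topology Finset

/-- The summand of the series `chainZeta`: the product `∏ᵢ 1 / fᵢ^{kᵢ}` if the tuple `f` satisfies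
`fⱼ < b fᵢ` for all `i < j`, and `0` otherwise. -/
noncomputable def chainTerm (b : ℕ → ℕ) (ks : List ℕ) (f : Fin ks.length → ℕ) : ℝ :=
  if ∀ i j, i < j → f j < b (f i) then ∏ i, ((f i : ℝ) ^ ks.get i)⁻¹ else 0

/-- The common form of the strict (`b = id`) and non-strict (`b = Nat.succ`) multiple zeta values.
Indices `fᵢ = 0` are allowed, since they contribute `0` when the exponents are positive. -/
noncomputable def chainZeta (b : ℕ → ℕ) (ks : List ℕ) : ℝ := ∑' f, chainTerm b ks f

/-- The truncation of `chainZeta` to indices smaller than `N`. -/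
noncomputable def truncChainZeta (b : ℕ → ℕ) (ks : List ℕ) (N : ℕ) : ℝ :=
  ∑ f ∈ Fintype.piFinset fun _ => range N, chainTerm b ks f

variable {b : ℕ → ℕ}

lemma chainTerm_nonneg (ks : List ℕ) (f : Fin ks.length → ℕ) : 0 ≤ chainTerm b ks f := by
  unfold chainTerm
  split_ifs
  · positivity
  · rfl

lemma chainTerm_cons (k : ℕ) (ks : List ℕ) (m : ℕ) (f : Fin ks.length → ℕ) :
    chainTerm b (k :: ks) (Fin.cons m f : Fin (ks.length + 1) → ℕ) =
      if ∀ j, f j < b m then ((m : ℝ) ^ k)⁻¹ * chainTerm b ks f else 0 := by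
  have h_chain : (∀ i j : Fin (ks.length + 1), i < j →
      (Fin.cons m f : Fin (ks.length + 1) → ℕ) j <
        b ((Fin.cons m f : Fin (ks.length + 1) → ℕ) i)) ↔
      (∀ j, f j < b m) ∧ ∀ i j, i < j → f j < b (f i) := by
    simp [Fin.forall_fin_succ]
  unfold chainTerm
  simp only [List.length_cons, h_chain, Fin.prod_univ_succ, ite_and]
  split_ifs <;> simp

lemma chainZeta_nil : chainZeta b [] = 1 := by
  simp [chainZeta, chainTerm]

lemma truncChainZeta_nil (N : ℕ) : truncChainZeta b [] N = 1 := by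
  simp [truncChainZeta, chainTerm]

lemma truncChainZeta_cons (hb : ∀ m, b m ≤ m + 1) (k : ℕ) (ks : List ℕ) (N : ℕ) :
    truncChainZeta b (k :: ks) N =
      ∑ m ∈ range N, ((m : ℝ) ^ k)⁻¹ * truncChainZeta b ks (b m) := by
  have h_split : truncChainZeta b (k :: ks) N = ∑ m ∈ range N,
      ∑ f ∈ Fintype.piFinset fun _ : Fin ks.length => range N,
        chainTerm b (k :: ks) (Fin.cons m f : Fin (ks.length + 1) → ℕ) := by
    rw [← sum_product']
    refine (sum_equiv (Fin.consEquiv fun _ : Fin (ks.length + 1) => ℕ) (fun p => ?_)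
      fun _ _ => rfl).symm
    simp [Fin.forall_fin_succ, Fin.consEquiv]
  rw [h_split]
  refine sum_congr rfl fun m hm => ?_
  have h_restrict : (Fintype.piFinset fun _ : Fin ks.length => range N).filter
      (fun f => ∀ j, f j < b m) = Fintype.piFinset fun _ => range (b m) := by
    have h_le : b m ≤ N := (hb m).trans (mem_range.mp hm)
    ext f
    simpa using fun h j => (h j).trans_le h_le
  simp only [chainTerm_cons]
  rw [← sum_filter, h_restrict, truncChainZeta, mul_sum]

lemma sum_nestedSum_eq_truncChainZeta (hb : ∀ m, b m ≤ m + 1) (l : List Letter) (n N : ℕ) :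
    ∑ m ∈ range N, ((m : ℝ) ^ n)⁻¹ * nestedSum b (word (.ofList l)) recip m =
      truncChainZeta b (toZAux (l ++ [Letter.y]) n) N := by
  induction l generalizing n N with
  | nil =>
    simp [toZAux, truncChainZeta_cons hb, truncChainZeta_nil, word_one, recip, pow_succ', mul_comm]
  | cons u l ih =>
    rw [word_ofList_cons]
    cases u
    · rw [List.cons_append, toZAux, ← ih]
      refine sum_congr rfl fun m _ => ?_
      rw [← X, nestedSum_X_mul, pow_succ, mul_inv, mul_assoc]
    · rw [List.cons_append, toZAux, truncChainZeta_cons hb]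
      refine sum_congr rfl fun m _ => ?_
      have ih_zero := ih 0 (b m)
      simp only [pow_zero, inv_one, one_mul] at ih_zero
      rw [← Y, nestedSum_Y_mul, ih_zero, pow_succ, mul_inv, mul_assoc]

lemma hasSum_of_tendsto_sum {ι : Type*} {f : ι → ℝ} (hf : ∀ i, 0 ≤ f i) {s : ℕ → Finset ι}
    (hs : Tendsto s atTop atTop) {L : ℝ} (hL : Tendsto (fun N => ∑ i ∈ s N, f i) atTop (𝓝 L)) :
    HasSum f L :=
  (tendsto_iff_tendsto_subseq_of_monotone (sum_mono_set_of_nonneg hf) hs).mpr hL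

lemma tendsto_piFinset_range (n : ℕ) :
    Tendsto (fun N => Fintype.piFinset fun _ : Fin n => range N) atTop atTop := by
  refine Monotone.tendsto_atTop_finset
    (fun _ _ h => Fintype.piFinset_subset _ _ fun _ => range_mono h) fun f => ?_
  exact ⟨univ.sup f + 1, by simpa [Nat.lt_succ_iff] using fun i => le_sup (mem_univ i)⟩

lemma hasSum_nestedSum_word (hb : ∀ m, b m ≤ m + 1) (l : List Letter) :
    HasSum (nestedSum b (X * word (.ofList l)) recip)
      (chainZeta b (toZAux (Letter.x :: l ++ [Letter.y]) 0)) := by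
  have h_summable := summable_nestedSum_X_mul hb (word (.ofList l))
  have h_trunc := sum_nestedSum_eq_truncChainZeta hb (Letter.x :: l) 0
  simp only [pow_zero, inv_one, one_mul, word_ofList_cons] at h_trunc
  have h_tendsto : Tendsto (truncChainZeta b (toZAux (Letter.x :: l ++ [Letter.y]) 0)) atTop
      (𝓝 (∑' m, nestedSum b (X * word (.ofList l)) recip m)) :=
    h_summable.hasSum.tendsto_sum_nat.congr h_trunc
  have h_chain := hasSum_of_tendsto_sum (chainTerm_nonneg _) (tendsto_piFinset_range _) h_tendsto
  rw [chainZeta, h_chain.tsum_eq]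
  exact h_summable.hasSum

lemma toZAux_pos (l : List Letter) (n : ℕ) : ∀ k ∈ toZAux l n, 0 < k := by
  induction l generalizing n with
  | nil => simp [toZAux]
  | cons u l ih => cases u <;> simp [toZAux] <;> grind

lemma tsum_subtype_eq_chainZeta {ks : List ℕ} (hks : ∀ k ∈ ks, 0 < k)
    {p : (Fin ks.length → ℕ) → Prop}
    (hp : ∀ f, p f ↔ (∀ i, 0 < f i) ∧ ∀ i j, i < j → f j < b (f i)) :
    ∑' m : {f // p f}, ∏ i, ((m.1 i : ℝ) ^ ks.get i)⁻¹ = chainZeta b ks := by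
  classical
  refine (tsum_subtype {f | p f} fun f => ∏ i, ((f i : ℝ) ^ ks.get i)⁻¹).trans
    (tsum_congr fun f => ?_)
  simp only [Set.indicator_apply, Set.mem_ofPred_eq, hp, chainTerm, ite_and]
  split_ifs with h_pos h_chain h_chain
  · rfl
  · rfl
  · obtain ⟨i, hi⟩ := not_forall.mp h_pos
    refine (prod_eq_zero (mem_univ i) ?_).symm
    rw [Nat.eq_zero_of_not_pos hi, Nat.cast_zero, zero_pow (hks _ (List.get_mem ..)).ne', inv_zero]
  · rfl

lemma mzeta_eq_chainZeta {ks : List ℕ} (hks : ∀ k ∈ ks, 0 < k) : mzeta ks = chainZeta id ks :=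
  tsum_subtype_eq_chainZeta hks fun _ => Iff.rfl

lemma nmzeta_eq_chainZeta {ks : List ℕ} (hks : ∀ k ∈ ks, 0 < k) :
    nmzeta ks = chainZeta Nat.succ ks := by
  refine tsum_subtype_eq_chainZeta hks fun f => and_congr_right fun _ => ?_
  simp only [Nat.lt_succ_iff]
  exact ⟨fun h i j hij => h i j hij.le,
    fun h i j hij => antitone_iff_forall_lt.mpr (fun _ _ => h _ _) hij⟩

/-- The linear extension of `chainZeta` to `H`, subsuming `Z` (`b = id`) and `Z̄`
(`b = Nat.succ`). -/
noncomputable def chainEval (b : ℕ → ℕ) : H →ₗ[ℚ] ℝ := wordExt fun w => chainZeta b (toZ w)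

lemma Z_eq_chainEval (a : H) : Z a = chainEval id a := by
  simp [Z, chainEval, wordExt_apply, Rat.smul_def, toZ, mzeta_eq_chainZeta (toZAux_pos _ _)]

lemma Zbar_eq_chainEval (a : H) : Zbar a = chainEval Nat.succ a := by
  simp [Zbar, chainEval, wordExt_apply, Rat.smul_def, toZ, nmzeta_eq_chainZeta (toZAux_pos _ _)]

lemma chainEval_one : chainEval b 1 = 1 := by
  rw [← word_one, chainEval, wordExt_word]
  exact chainZeta_nil

lemma hasSum_nestedSum_X_mul (hb : ∀ m, b m ≤ m + 1) (F : H) :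
    HasSum (nestedSum b (X * F) recip) (chainEval b (X * F * Y)) := by
  induction F using MonoidAlgebra.induction_on with
  | of w =>
    have h_word : X * word w * Y = word (.ofList (Letter.x :: w.toList ++ [Letter.y])) := by
      rw [word_ofList_append_y, word_ofList_cons]; rfl
    change HasSum (nestedSum b (X * word w) recip) (chainEval b (X * word w * Y))
    rw [h_word, chainEval, wordExt_word]
    exact hasSum_nestedSum_word hb w.toList
  | add F G hF hG =>
    rw [mul_add, add_mul, map_add, map_add]
    exact hF.add hG
  | smul c F hF =>
    rw [mul_smul_comm, smul_mul_assoc, map_smul, map_smul]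
    exact hF.const_smul c

theorem Zbar_eq_Z_linS {a : H} (ha : a ∈ H0) : Zbar a = Z (linS a) := by
  have h_eq : H0 ≤ LinearMap.eqLocus (chainEval Nat.succ) (chainEval id ∘ₗ linS) := by
    refine H0_le ?_ ?_
    · simp [linS_one, chainEval_one]
    · rintro _ ⟨F, rfl⟩
      have h_strict := hasSum_nestedSum_X_mul (b := id) Nat.le_succ (S1 F)
      have h_weak := hasSum_nestedSum_X_mul (b := Nat.succ) (fun _ => le_rfl) F
      rw [nestedSum_succ, AlgHom.comp_apply, map_mul, S1_X] at h_weak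
      simpa [← mul_assoc, linS_mul_Y, S1_X] using h_weak.unique h_strict
  rw [Zbar_eq_chainEval, Z_eq_chainEval]
  exact h_eq ha

end ChainSums

section MultiplicationByY

/-- `IsYMul op a b e` records the recursive rules by which `op`, the multiplication by `y` for one
of the four products on `H¹`, passes a leading letter. The products differ only in the correction
terms `a`, `b` and `e`. -/
structure IsYMul (op : H → H) (a b e : H) : Prop extends IsLinearMap ℚ op where
  map_one : op 1 = Y
  map_Y : op Y = Y * Y + Y * Y + X * (e * Y)
  map_X_mul : ∀ v ∈ Hy, op (X * v) = Y * (X * v) + X * (op v + a * v)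
  map_Y_mul : ∀ v ∈ Hy, op (Y * v) = Y * (Y * v) + X * (b * v) + Y * op v

/-- The word `l y`. -/
noncomputable def yWord (l : List Letter) : H := word (.ofList (l ++ [Letter.y]))

lemma yWord_cons (u : Letter) (l : List Letter) : yWord (u :: l) = word (.of u) * yWord l :=
  word_ofList_cons u (l ++ [Letter.y])

lemma linearMap_eq_of_mem_Hy {f g : H →ₗ[ℚ] H} (h : ∀ l, f (yWord l) = g (yWord l))
    {v : H} (hv : v ∈ Hy) : f v = g v := by
  obtain ⟨F, rfl⟩ := hv
  have h_words : f ∘ₗ LinearMap.mulRight ℚ Y = g ∘ₗ LinearMap.mulRight ℚ Y :=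
    linearMap_ext fun l => by
      simp only [LinearMap.comp_apply, LinearMap.mulRight_apply, ← word_ofList_append_y]
      exact h l
  exact LinearMap.congr_fun h_words F

lemma isYMul_of_yWord {op : H →ₗ[ℚ] H} {a b e : H} (map_one : op 1 = Y)
    (map_Y : op Y = Y * Y + Y * Y + X * (e * Y))
    (map_X_mul : ∀ l, op (X * yWord l) = Y * (X * yWord l) + X * (op (yWord l) + a * yWord l))
    (map_Y_mul : ∀ l, op (Y * yWord l) =
      Y * (Y * yWord l) + X * (b * yWord l) + Y * op (yWord l)) :
    IsYMul op a b e where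
  toIsLinearMap := op.isLinear
  map_one := map_one
  map_Y := map_Y
  map_X_mul _ hv := linearMap_eq_of_mem_Hy (f := op ∘ₗ LinearMap.mulLeft ℚ X)
    (g := LinearMap.mulLeft ℚ Y ∘ₗ LinearMap.mulLeft ℚ X +
      LinearMap.mulLeft ℚ X ∘ₗ (op + LinearMap.mulLeft ℚ a)) map_X_mul hv
  map_Y_mul _ hv := linearMap_eq_of_mem_Hy (f := op ∘ₗ LinearMap.mulLeft ℚ Y)
    (g := LinearMap.mulLeft ℚ Y ∘ₗ LinearMap.mulLeft ℚ Y +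
      LinearMap.mulLeft ℚ X ∘ₗ LinearMap.mulLeft ℚ b + LinearMap.mulLeft ℚ Y ∘ₗ op) map_Y_mul hv

lemma z_one : z 1 = Y := rfl

lemma z_add_two (k : ℕ) : z (k + 2) = X * z (k + 1) :=
  word_ofList_cons Letter.x _

lemma word_zListW_nil : word (zListW []) = 1 := rfl

lemma word_zListW_cons (k : ℕ) (ks : List ℕ) :
    word (zListW (k :: ks)) = z k * word (zListW ks) :=
  word_mul (zW k) (zListW ks)

lemma word_zListW_add_two_cons (k : ℕ) (ks : List ℕ) :
    word (zListW ((k + 2) :: ks)) = X * word (zListW ((k + 1) :: ks)) := by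
  rw [word_zListW_cons, word_zListW_cons, z_add_two, mul_assoc]

lemma exists_toZAux_append_y (l : List Letter) : ∃ k ks,
    yWord l = word (zListW ((k + 1) :: ks)) ∧
      ∀ n, toZAux (l ++ [Letter.y]) n = (n + k + 1) :: ks := by
  induction l with
  | nil => exact ⟨0, [], rfl, fun n => rfl⟩
  | cons u l ih =>
    obtain ⟨k, ks, h_word, h_toZ⟩ := ih
    rw [List.cons_append, yWord_cons, h_word]
    cases u
    · refine ⟨k + 1, ks, ?_, fun n => ?_⟩
      · rw [word_zListW_add_two_cons, X]
      · rw [toZAux, h_toZ]; congr 1; ring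
    · exact ⟨0, (k + 1) :: ks, (word_zListW_cons 1 _).symm, fun n => by simp [toZAux, h_toZ]⟩

lemma word_zListW_toZAux_append_y (l : List Letter) :
    word (zListW (toZAux (l ++ [Letter.y]) 0)) = yWord l := by
  obtain ⟨k, ks, h_word, h_toZ⟩ := exists_toZAux_append_y l
  rw [h_toZ, zero_add, h_word]

lemma isYMul_wordExt_toZ {φ : List ℕ → H} {ε : ℚ} (nil : φ [] = Y)
    (cons : ∀ k ks, φ (k :: ks) = Y * word (zListW (k :: ks)) + z k * φ ks +
      ε • (z (1 + k) * word (zListW ks))) :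
    IsYMul (wordExt fun w => φ (toZ w)) (-Y) (ε • Y) (ε • 1) := by
  have apply_yWord (l : List Letter) :
      (wordExt fun w => φ (toZ w)) (yWord l) = φ (toZAux (l ++ [Letter.y]) 0) :=
    wordExt_word ..
  have cons_succ (k : ℕ) (ks : List ℕ) : φ ((k + 1) :: ks) =
      Y * word (zListW ((k + 1) :: ks)) + z (k + 1) * φ ks +
        ε • (X * word (zListW ((k + 1) :: ks))) := by
    rw [cons, ← word_zListW_add_two_cons, word_zListW_cons (k + 2), add_comm 1]
  refine isYMul_of_yWord ?_ ?_ (fun l => ?_) fun l => ?_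
  · rw [← word_one, wordExt_word, ← nil]; rfl
  · have h_Y : (wordExt fun w => φ (toZ w)) Y = φ [1] := apply_yWord []
    rw [h_Y, cons_succ 0, nil, word_zListW_cons, word_zListW_nil, zero_add, z_one]
    simp
  · obtain ⟨k, ks, h_word, h_toZ⟩ := exists_toZAux_append_y l
    have h_v : (wordExt fun w => φ (toZ w)) (yWord l) =
        Y * yWord l + z (k + 1) * φ ks + ε • (X * yWord l) := by
      rw [apply_yWord, h_toZ, zero_add, cons_succ, h_word]
    have h_Xv : (wordExt fun w => φ (toZ w)) (X * yWord l) =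
        Y * (X * yWord l) + X * (z (k + 1) * φ ks) + ε • (X * (X * yWord l)) := by
      rw [X, ← yWord_cons, apply_yWord, List.cons_append, toZAux, h_toZ, zero_add, add_comm 1 k,
        cons_succ, word_zListW_add_two_cons, ← h_word, z_add_two, mul_assoc, yWord_cons, ← X]
    rw [h_v, h_Xv]
    simp only [mul_smul_comm, mul_add, neg_mul, mul_neg]
    abel
  · have h_Yv : (wordExt fun w => φ (toZ w)) (Y * yWord l) =
        φ (1 :: toZAux (l ++ [Letter.y]) 0) := by
      rw [Y, ← yWord_cons, apply_yWord]; rfl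
    rw [h_Yv, cons_succ 0, word_zListW_cons, word_zListW_toZAux_append_y,
      apply_yWord, zero_add, z_one]
    simp only [smul_mul_assoc, mul_smul_comm]
    abel

lemma isYMul_wordExt_toList {ψ : List Letter → H} {ε : ℚ} (nil : ψ [] = Y)
    (cons : ∀ u l, ψ (u :: l) = Y * word (.ofList (u :: l)) + word (.of u) * ψ l -
      ε • (X * word (.ofList (u :: l)) + δ l • (word (.of (τ u)) * Y))) :
    IsYMul (wordExt fun w => ψ w.toList) (-(ε • X)) (-(ε • Y)) (-(ε • 2)) := by
  have apply_yWord (l : List Letter) :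
      (wordExt fun w => ψ w.toList) (yWord l) = ψ (l ++ [Letter.y]) :=
    wordExt_word ..
  have cons_yWord (u : Letter) (l : List Letter) : ψ (u :: (l ++ [Letter.y])) =
      Y * (word (.of u) * yWord l) + word (.of u) * ψ (l ++ [Letter.y]) -
        ε • (X * (word (.of u) * yWord l)) := by
    have h_delta : δ (l ++ [Letter.y]) = 0 := by cases l <;> rfl
    rw [cons, h_delta, zero_smul, add_zero, word_ofList_cons, yWord]
  refine isYMul_of_yWord ?_ ?_ (fun l => ?_) fun l => ?_
  · rw [← word_one, wordExt_word, ← nil]; rfl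
  · have h_Y : (wordExt fun w => ψ w.toList) Y = ψ [Letter.y] := apply_yWord []
    rw [h_Y, cons, nil]
    change Y * Y + Y * Y - ε • (X * Y + (1 : ℚ) • (X * Y)) = _
    simp only [one_smul, neg_mul, mul_neg, smul_mul_assoc, mul_smul_comm, two_mul, mul_add,
      sub_eq_add_neg]
  · rw [X, ← yWord_cons, apply_yWord, apply_yWord, List.cons_append, cons_yWord, yWord_cons, ← X]
    simp only [mul_smul_comm, smul_mul_assoc, neg_mul, mul_neg, mul_add]
    abel
  · rw [Y, ← yWord_cons, apply_yWord, apply_yWord, List.cons_append, cons_yWord, yWord_cons, ← Y]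
    simp only [mul_smul_comm, smul_mul_assoc, neg_mul, mul_neg]
    abel

lemma isYMul_harm : IsYMul (harm Y) (-Y) Y 1 := by
  have h_ext : harm Y = wordExt fun w => harmW [1] (toZ w) :=
    funext fun v => sum_coeff_word_smul (fun w₁ w₂ => harmW (toZ w₁) (toZ w₂)) (.of Letter.y) v
  rw [h_ext]
  simpa using isYMul_wordExt_toZ (φ := harmW [1]) (ε := 1) (by rw [harmW]; rfl)
    fun k ks => by simp [harmW, z_one]

lemma isYMul_nharm : IsYMul (nharm Y) (-Y) (-Y) (-1) := by
  have h_ext : nharm Y = wordExt fun w => nharmW [1] (toZ w) :=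
    funext fun v => sum_coeff_word_smul (fun w₁ w₂ => nharmW (toZ w₁) (toZ w₂)) (.of Letter.y) v
  rw [h_ext]
  simpa using isYMul_wordExt_toZ (φ := nharmW [1]) (ε := -1) (by rw [nharmW]; rfl)
    fun k ks => by simp [nharmW, z_one, sub_eq_add_neg]

lemma isYMul_sh : IsYMul (sh Y) 0 0 0 := by
  have h_ext : sh Y = wordExt fun w => shW [Letter.y] w.toList :=
    funext fun v => sum_coeff_word_smul (fun w₁ w₂ => shW w₁.toList w₂.toList) (.of Letter.y) v
  rw [h_ext]
  simpa using isYMul_wordExt_toList (ψ := shW [Letter.y]) (ε := 0) (by rw [shW]; rfl)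
    fun u l => by simp [shW, Y]

lemma isYMul_nsh : IsYMul (nsh Y) (-X) (-Y) (-2) := by
  have h_ext : nsh Y = wordExt fun w => nshW [Letter.y] w.toList :=
    funext fun v => sum_coeff_word_smul (fun w₁ w₂ => nshW w₁.toList w₂.toList) (.of Letter.y) v
  rw [h_ext]
  simpa using isYMul_wordExt_toList (ψ := nshW [Letter.y]) (ε := 1) (by rw [nshW]; rfl)
    fun u l => by
      have h_delta : δ [] = 1 := rfl
      have h_tau : τ Letter.y = Letter.x := rfl
      simp only [nshW, h_delta, h_tau, one_smul, word_ofList_cons, FreeMonoid.ofList_nil, word_one,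
        mul_one, X, Y, sub_sub]

end MultiplicationByY

section Generation

variable {op : H → H} {a b e : H}

lemma IsYMul.map_mem_Hy (h : IsYMul op a b e) {v : H} (hv : v ∈ Hy) : op v ∈ Hy := by
  refine Hy_le (p := Hy.comap (h.toIsLinearMap.mk' op)) ?_ (fun w hw hopw => ?_)
    (fun w hw hopw => ?_) hv <;> change op _ ∈ Hy
  · rw [h.map_Y]
    exact add_mem (add_mem (mul_Y_mem_Hy Y) (mul_Y_mem_Hy Y)) (mul_mem_Hy X (mul_Y_mem_Hy e))
  · rw [h.map_X_mul w hw]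
    exact add_mem (mul_mem_Hy Y (mul_mem_Hy X hw)) (mul_mem_Hy X (add_mem hopw (mul_mem_Hy a hw)))
  · rw [h.map_Y_mul w hw]
    exact add_mem (add_mem (mul_mem_Hy Y (mul_mem_Hy Y hw)) (mul_mem_Hy X (mul_mem_Hy b hw)))
      (mul_mem_Hy Y hopw)

lemma IsYMul.map_mem_H1 (h : IsYMul op a b e) {v : H} (hv : v ∈ H1) : op v ∈ H1 := by
  refine H1_le (p := H1.comap (h.toIsLinearMap.mk' op)) ?_ (fun w hw => ?_) hv
  · simpa [h.map_one] using Hy_le_H1 Y_mem_Hy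
  · exact Hy_le_H1 (h.map_mem_Hy hw)

lemma IsYMul.sub_Y_mul_mem_H0 (h : IsYMul op a b e) {v : H} (hv : v ∈ H0) :
    op v - Y * v ∈ H0 := by
  refine H0_le (p := H0.comap (h.toIsLinearMap.mk' op - LinearMap.mulLeft ℚ Y)) ?_
    (fun w hw => ?_) hv
  · simp [h.map_one]
  · change op (X * w) - Y * (X * w) ∈ H0
    rw [h.map_X_mul w hw, add_sub_cancel_left]
    exact X_mul_mem_H0 (add_mem (h.map_mem_Hy hw) (mul_mem_Hy a hw))

lemma IsYMul.map_Y_mul_sub_mem_H0 (h : IsYMul op a b e) {v : H} (hv : v ∈ H1) :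
    op (Y * v) - (Y * (Y * v) + Y * op v) ∈ H0 := by
  refine H1_le (p := H0.comap (h.toIsLinearMap.mk' op ∘ₗ LinearMap.mulLeft ℚ Y -
    (LinearMap.mulLeft ℚ Y ∘ₗ LinearMap.mulLeft ℚ Y +
      LinearMap.mulLeft ℚ Y ∘ₗ h.toIsLinearMap.mk' op))) ?_ (fun w hw => ?_) hv
  · change op (Y * 1) - (Y * (Y * 1) + Y * op 1) ∈ H0
    rw [mul_one, h.map_Y, h.map_one, add_sub_cancel_left]
    exact X_mul_mem_H0 (mul_Y_mem_Hy e)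
  · change op (Y * w) - (Y * (Y * w) + Y * op w) ∈ H0
    rw [h.map_Y_mul w hw, add_right_comm, add_sub_cancel_left]
    exact X_mul_mem_H0 (mul_mem_Hy b hw)

/-- The filtration `H⁰ + y H⁰ + ⋯ + yⁿ H⁰` of `H¹`, by the number of leading letters `y`. -/
noncomputable def yFiltration : ℕ → Submodule ℚ H
  | 0 => H0
  | n + 1 => H0 ⊔ (yFiltration n).map (LinearMap.mulLeft ℚ Y)

lemma Y_mul_mem_yFiltration {n : ℕ} {v : H} (hv : v ∈ yFiltration n) :
    Y * v ∈ yFiltration (n + 1) :=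
  Submodule.mem_sup_right (Submodule.mem_map_of_mem hv)

lemma H0_le_yFiltration (n : ℕ) : H0 ≤ yFiltration n := by
  cases n
  · exact le_rfl
  · exact le_sup_left

lemma yFiltration_succ_le {n : ℕ} {p : Submodule ℚ H} (hH0 : H0 ≤ p)
    (hY : ∀ v ∈ yFiltration n, Y * v ∈ p) : yFiltration (n + 1) ≤ p :=
  sup_le hH0 (Submodule.map_le_iff_le_comap.mpr hY)

lemma yFiltration_le_H1 (n : ℕ) : yFiltration n ≤ H1 := by
  induction n with
  | zero => exact H0_le_H1
  | succ n ih =>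
    refine yFiltration_succ_le H0_le_H1 fun v hv => ?_
    exact H1_le (p := H1.comap (LinearMap.mulLeft ℚ Y)) (by simpa using Hy_le_H1 Y_mem_Hy)
      (fun w hw => Hy_le_H1 (mul_mem_Hy Y hw)) (ih hv)

lemma H1_le_iSup_yFiltration : H1 ≤ ⨆ n, yFiltration n := by
  have hH0 : H0 ≤ ⨆ n, yFiltration n := le_iSup yFiltration 0
  have hY : ⨆ n, yFiltration n ≤ (⨆ n, yFiltration n).comap (LinearMap.mulLeft ℚ Y) :=
    iSup_le fun n _ hv => Submodule.mem_iSup_of_mem (n + 1) (Y_mul_mem_yFiltration hv)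
  refine H1_le (hH0 one_mem_H0) (Hy_le ?_ (fun v hv _ => hH0 (X_mul_mem_H0 hv)) fun v _ hv => hY hv)
  simpa using hY (hH0 one_mem_H0)

/-- Modulo lower terms `op` multiplies `yⁿ v` (`v ∈ H⁰`) by `(n + 1) y`, as `y` can be inserted
next to any of the `n` leading letters. -/
lemma IsYMul.sub_smul_mem_yFiltration (h : IsYMul op a b e) {n : ℕ} {v : H}
    (hv : v ∈ yFiltration n) : op v - (n + 1 : ℚ) • (Y * v) ∈ yFiltration n := by
  induction n generalizing v with
  | zero => simpa [yFiltration] using h.sub_Y_mul_mem_H0 hv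
  | succ n ih =>
    refine yFiltration_succ_le (p := (yFiltration (n + 1)).comap
      (h.toIsLinearMap.mk' op - ((n + 1 : ℕ) + 1 : ℚ) • LinearMap.mulLeft ℚ Y))
      (fun w hw => ?_) (fun w hw => ?_) hv
    · change op w - ((n + 1 : ℕ) + 1 : ℚ) • (Y * w) ∈ yFiltration (n + 1)
      have h_lower := H0_le_yFiltration (n + 1) (h.sub_Y_mul_mem_H0 hw)
      have h_Y := Y_mul_mem_yFiltration (H0_le_yFiltration n hw)
      convert sub_mem h_lower (Submodule.smul_mem _ (n + 1 : ℚ) h_Y) using 1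
      push_cast
      module
    · change op (Y * w) - ((n + 1 : ℕ) + 1 : ℚ) • (Y * (Y * w)) ∈ yFiltration (n + 1)
      have h_lower := H0_le_yFiltration (n + 1) (h.map_Y_mul_sub_mem_H0 (yFiltration_le_H1 n hw))
      have h_ih := Y_mul_mem_yFiltration (ih hw)
      convert add_mem h_lower h_ih using 1
      simp only [mul_sub, mul_smul_comm]
      push_cast
      module

lemma IsYMul.H1_le_of_forall_mem (h : IsYMul op a b e) {p : Submodule ℚ H} (hH0 : H0 ≤ p)
    (hop : ∀ v ∈ p, op v ∈ p) : H1 ≤ p := by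
  refine H1_le_iSup_yFiltration.trans (iSup_le fun n => ?_)
  induction n with
  | zero => exact hH0
  | succ n ih =>
    refine yFiltration_succ_le hH0 fun v hv => ?_
    have h_smul : (n + 1 : ℚ) • (Y * v) ∈ p := by
      simpa using sub_mem (hop v (ih hv)) (ih (h.sub_smul_mem_yFiltration hv))
    exact (p.smul_mem_iff (by positivity)).mp h_smul

end Generation

section Compatibility

variable {mul mulbar : H → H → H} {a b e abar bbar ebar : H}

lemma IsYMul.linS_comm {op opbar : H → H} (h : IsYMul op a b e)
    (hbar : IsYMul opbar abar bbar ebar) (ha : X + S1 abar = a) (hb : X + Y + S1 bbar = a + b)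
    (he : 2 + S1 ebar = e) {v : H} (hv : v ∈ H1) : linS (opbar v) = op (linS v) := by
  refine H1_le (p := LinearMap.eqLocus (linS ∘ₗ hbar.toIsLinearMap.mk' opbar)
    (h.toIsLinearMap.mk' op ∘ₗ linS)) ?_ (Hy_le ?_ (fun w hw ih => ?_) fun w hw ih => ?_) hv
  · change linS (opbar 1) = op (linS 1)
    rw [hbar.map_one, linS_one, h.map_one, linS_Y]
  · change linS (opbar Y) = op (linS Y)
    rw [hbar.map_Y, linS_Y, h.map_Y, ← he]
    simp only [map_add, linS_mul _ Y_mem_Hy, linS_mul _ (mul_Y_mem_Hy _), linS_Y, S1_X, S1_Y]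
    noncomm_ring
  · change linS (opbar w) = op (linS w) at ih
    change linS (opbar (X * w)) = op (linS (X * w))
    rw [hbar.map_X_mul w hw, linS_mul X hw, S1_X, h.map_X_mul _ (linS_mem_Hy hw), ← ih, ← ha]
    simp only [mul_add, map_add, linS_mul _ hw, linS_mul _ (mul_mem_Hy _ hw),
      linS_mul _ (hbar.map_mem_Hy hw), S1_X, S1_Y]
    noncomm_ring
  · change linS (opbar w) = op (linS w) at ih
    change linS (opbar (Y * w)) = op (linS (Y * w))
    have h_corr : X * ((X + Y + S1 bbar) * linS w) - X * ((a + b) * linS w) = 0 := by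
      rw [hb, sub_self]
    rw [hbar.map_Y_mul w hw, linS_mul Y hw, S1_Y, add_mul, h.map_add,
      h.map_X_mul _ (linS_mem_Hy hw), h.map_Y_mul _ (linS_mem_Hy hw), ← ih]
    simp only [map_add, linS_mul _ hw, linS_mul _ (mul_mem_Hy _ hw),
      linS_mul _ (hbar.map_mem_Hy hw), S1_X, S1_Y]
    rw [← sub_eq_zero, ← h_corr]
    noncomm_ring

theorem regHom_eq_comp_linS (h : IsYMul (mul Y) a b e)
    (hbar : IsYMul (mulbar Y) abar bbar ebar) (ha : X + S1 abar = a)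
    (hb : X + Y + S1 bbar = a + b) (he : 2 + S1 ebar = e) {f g : H →ₗ[ℚ] Polynomial ℝ}
    (hf : IsRegHom mul Z f) (hg : IsRegHom mulbar Zbar g) {v : H} (hv : v ∈ H1) :
    g v = f (linS v) := by
  obtain ⟨hf_mul, hf_H0, hf_Y⟩ := hf
  obtain ⟨hg_mul, hg_H0, hg_Y⟩ := hg
  have hY : Y ∈ H1 := Hy_le_H1 Y_mem_Hy
  have h_le : H1 ≤ H1 ⊓ LinearMap.eqLocus g (f ∘ₗ linS) := by
    refine hbar.H1_le_of_forall_mem (le_inf H0_le_H1 fun w hw => ?_) fun w hw => ?_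
    · change g w = f (linS w)
      rw [hg_H0 w hw, hf_H0 _ (linS_mem_H0 hw), Zbar_eq_Z_linS hw]
    · obtain ⟨hw, hgw⟩ := hw
      change g w = f (linS w) at hgw
      refine ⟨hbar.map_mem_H1 hw, ?_⟩
      change g (mulbar Y w) = f (linS (mulbar Y w))
      rw [hg_mul Y hY w hw, hg_Y, hgw, h.linS_comm hbar ha hb he hw,
        hf_mul Y hY _ (linS_mem_H1 hw), hf_Y]
  exact (h_le hv).2

end Compatibility

end H

/-- Compatibility of the regularization maps with `S`:
`Z̄^{*̄} = Z^{*} ∘ S` and `Z̄^{ш̄} = Z^{ш} ∘ S` on `H¹`, where `Z^{*}`, `Z^{ш}`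
are the regularized evaluation maps extending `Z` and `Z̄^{*̄}`, `Z̄^{ш̄}` those
extending `Z̄`, all sending `y` to `T`. -/
theorem reg_homs_compat_S
    (fstar fsh gstar gsh : H →ₗ[ℚ] Polynomial ℝ)
    (hfstar : IsRegHom harm Z fstar) (hfsh : IsRegHom sh Z fsh)
    (hgstar : IsRegHom nharm Zbar gstar) (hgsh : IsRegHom nsh Zbar gsh) :
    ∀ a ∈ H1, gstar a = fstar (S a) ∧ gsh a = fsh (S a) := by
  intro v hv
  rw [← linS_apply]
  constructor
  · refine regHom_eq_comp_linS isYMul_harm isYMul_nharm ?_ ?_ ?_ hfstar hgstar hv <;>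
      norm_num [S1_X, S1_Y]
  · refine regHom_eq_comp_linS isYMul_sh isYMul_nsh ?_ ?_ ?_ hfsh hgsh hv <;>
      norm_num [S1_X, S1_Y, map_ofNat]
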